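/- Let A be a commutative noetherian local ring, let x, y ∈ A be an exact pair of zero divisors, and let a ∈ A. Then there is an isomorphism of A-algebras End_A(G_a)^op ≅ End_A(H_a). In particular, G_a is indecomposable if and only if H_a is indecomposable. -/

import Mathlib

/-!
Formalization of results from "Construction of totally reflexive modules
from an exact pair of zero divisors" by Henrik Holm.
-/

noncomputable section

/-- Non-units `x, y` in `A` form an *exact pair of zero divisors* if
`Ann_A(x) = (y)` and `Ann_A(y) = (x)`. -/
def IsExactZeroDivisorPair {A : Type*} [CommRing A] (x y : A) : Prop :=
  ¬ IsUnit x ∧ ¬ IsUnit y ∧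
    (∀ a : A, a * x = 0 ↔ a ∈ Ideal.span {y}) ∧
    (∀ a : A, a * y = 0 ↔ a ∈ Ideal.span {x})

open Matrix in
/-- The matrix `γ_a = [[x, a], [0, y]]`. -/
def gammaMat {A : Type*} [CommRing A] (x y a : A) : Matrix (Fin 2) (Fin 2) A :=
  !![x, a; 0, y]

open Matrix in
/-- The matrix `η_a = [[y, -a], [0, x]]`. -/
def etaMat {A : Type*} [CommRing A] (x y a : A) : Matrix (Fin 2) (Fin 2) A :=
  !![y, -a; 0, x]

/-- `G_a`, the cokernel of `γ_a : A² → A²`. -/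
abbrev Gmod {A : Type*} [CommRing A] (x y a : A) : Type _ :=
  (Fin 2 → A) ⧸ LinearMap.range (Matrix.toLin' (gammaMat x y a))

/-- `H_a`, the cokernel of `η_a : A² → A²`. -/
abbrev Hmod {A : Type*} [CommRing A] (x y a : A) : Type _ :=
  (Fin 2 → A) ⧸ LinearMap.range (Matrix.toLin' (etaMat x y a))

/-- An `A`-module is *indecomposable* if it is nonzero and is not the internal
direct sum of two nonzero submodules. -/
def IsIndecomposableModule (A : Type*) [CommRing A] (M : Type*)
    [AddCommGroup M] [Module A M] : Prop :=
  (∃ m : M, m ≠ 0) ∧ ∀ N P : Submodule A M, IsCompl N P → N = ⊥ ∨ P = ⊥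

/-!
The matrices `γ_a` and `η_a` are adjugate to each other, so they are adjoint for the standard
symplectic form `ω` on `A²`, and for an exact pair of zero divisors the sequence
`⋯ → A² → A² → A² → ⋯` in which `γ_a` and `η_a` alternate is exact. The form
`(u, v) ↦ ω (η_a u) v` then descends to a perfect pairing `G_a × H_a → A`, and taking adjoints of
endomorphisms with respect to a perfect pairing is an anti-isomorphism of endomorphism algebras.
An anti-isomorphism matches idempotents, and these detect direct sum decompositions.
-/

section RightAdjoint

open LinearMap

variable {R M N : Type*} [CommRing R] [AddCommGroup M] [Module R M] [AddCommGroup N] [Module R N]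
  (p : M →ₗ[R] N →ₗ[R] R) [p.IsPerfPair]

/-- The adjoint of an endomorphism of `M` with respect to a perfect pairing of `M` and `N`: the
transpose, carried over from the dual of `M` to `N`. -/
def rightAdjoint (T : Module.End R M) : Module.End R N :=
  p.flip.toPerfPair.symm ∘ₗ T.dualMap ∘ₗ p.flip.toPerfPair

@[simp]
theorem apply_rightAdjoint (T : Module.End R M) (u : M) (v : N) :
    p u (rightAdjoint p T v) = p (T u) v := by
  simp [rightAdjoint]

variable {p}

theorem rightAdjoint_eq_iff {T : Module.End R M} {S : Module.End R N} :
    rightAdjoint p T = S ↔ ∀ u v, p (T u) v = p u (S v) := by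
  refine ⟨fun h u v => by rw [← h, apply_rightAdjoint], fun h => LinearMap.ext fun v => ?_⟩
  apply (IsPerfPair.bijective_right p).injective
  ext u
  simpa using h u v

variable (p)

theorem rightAdjoint_flip_rightAdjoint (T : Module.End R M) :
    rightAdjoint p.flip (rightAdjoint p T) = T :=
  rightAdjoint_eq_iff.2 fun v u => apply_rightAdjoint p T u v

/-- The anti-isomorphism of endomorphism algebras induced by a perfect pairing. -/
def endOpAlgEquivEnd : (Module.End R M)ᵐᵒᵖ ≃ₐ[R] Module.End R N where
  toFun T := rightAdjoint p T.unop
  invFun S := .op (rightAdjoint p.flip S)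
  left_inv T := MulOpposite.unop_injective (rightAdjoint_flip_rightAdjoint p T.unop)
  right_inv S := rightAdjoint_flip_rightAdjoint p.flip S
  map_mul' S T := rightAdjoint_eq_iff.2 <| by simp
  map_add' S T := rightAdjoint_eq_iff.2 <| by simp
  commutes' c := rightAdjoint_eq_iff.2 <| by
    simp [MulOpposite.algebraMap_apply, Module.algebraMap_end_apply]

end RightAdjoint

section TrivialIdempotents

/-- A nonzero ring whose only idempotents are `0` and `1`. -/
def HasTrivialIdempotents (S : Type*) [Ring S] : Prop :=
  Nontrivial S ∧ ∀ e : S, IsIdempotentElem e → e = 0 ∨ e = 1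

namespace HasTrivialIdempotents

variable {S T : Type*} [Ring S] [Ring T]

theorem of_ringEquiv (φ : S ≃+* T) (h : HasTrivialIdempotents S) : HasTrivialIdempotents T := by
  refine ⟨φ.toEquiv.nontrivial_congr.1 h.1, fun e he => ?_⟩
  simpa using h.2 (φ.symm e) (he.map φ.symm)

theorem congr (φ : S ≃+* T) : HasTrivialIdempotents S ↔ HasTrivialIdempotents T :=
  ⟨of_ringEquiv φ, of_ringEquiv φ.symm⟩

theorem op_iff : HasTrivialIdempotents Sᵐᵒᵖ ↔ HasTrivialIdempotents S := by
  refine and_congr MulOpposite.opEquiv.symm.nontrivial_congr ?_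
  simp [MulOpposite.forall, IsIdempotentElem, ← MulOpposite.op_mul]

end HasTrivialIdempotents

section Ring

variable {R M : Type*} [Ring R] [AddCommGroup M] [Module R M]

theorem nontrivial_end_iff : Nontrivial (Module.End R M) ↔ Nontrivial M := by
  refine ⟨fun _ => ?_, fun _ => inferInstance⟩
  by_contra h
  have := not_nontrivial_iff_subsingleton.1 h
  exact not_subsingleton (Module.End R M) inferInstance

theorem forall_isCompl_eq_bot_iff_forall_isIdempotentElem :
    (∀ P Q : Submodule R M, IsCompl P Q → P = ⊥ ∨ Q = ⊥) ↔
      ∀ e : Module.End R M, IsIdempotentElem e → e = 0 ∨ e = 1 := by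
  constructor
  · intro h e he
    have compl := LinearMap.IsIdempotentElem.isCompl he
    refine (h _ _ compl).imp LinearMap.range_eq_bot.1 fun hker => ?_
    exact LinearMap.ext fun m => LinearMap.ker_eq_bot.1 hker (LinearMap.congr_fun he m)
  · intro h P Q hPQ
    refine (h _ (Submodule.isIdempotentElem_projection hPQ)).imp (fun h0 => ?_) fun h1 => ?_
    · rw [← Submodule.range_projection hPQ, h0, LinearMap.range_zero]
    · rw [← Submodule.ker_projection hPQ, h1]
      exact LinearMap.ker_id

end Ring

variable {R M N : Type*} [CommRing R] [AddCommGroup M] [Module R M] [AddCommGroup N] [Module R N]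

theorem isIndecomposableModule_iff_hasTrivialIdempotents_end :
    IsIndecomposableModule R M ↔ HasTrivialIdempotents (Module.End R M) :=
  and_congr ((nontrivial_iff_exists_ne 0).symm.trans nontrivial_end_iff.symm)
    forall_isCompl_eq_bot_iff_forall_isIdempotentElem

theorem isIndecomposableModule_congr_of_endOp (φ : (Module.End R M)ᵐᵒᵖ ≃+* Module.End R N) :
    IsIndecomposableModule R M ↔ IsIndecomposableModule R N := by
  rw [isIndecomposableModule_iff_hasTrivialIdempotents_end,
    isIndecomposableModule_iff_hasTrivialIdempotents_end,
    ← HasTrivialIdempotents.op_iff, HasTrivialIdempotents.congr φ]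

end TrivialIdempotents

section CokernelPairing

open LinearMap

variable {R E F : Type*} [CommRing R] [AddCommGroup E] [Module R E] [AddCommGroup F] [Module R F]
  {B : E →ₗ[R] F →ₗ[R] R} {f f' : Module.End R E} {g g' : Module.End R F}

/-- The pairing `coker f × coker g → R` induced by `(u, v) ↦ B (f' u) v`, where `g` is adjoint to
`f` and `f' f = 0 = f f'`. -/
def cokernelPairing (hfg : ∀ u v, B (f u) v = B u (g v)) (hf'f : f' * f = 0) (hff' : f * f' = 0) :
    (E ⧸ range f) →ₗ[R] (F ⧸ range g) →ₗ[R] R :=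
  (B ∘ₗ f').liftQ₂ (range f) (range g)
    (by
      rintro _ ⟨u, rfl⟩
      have : f' (f u) = 0 := LinearMap.congr_fun hf'f u
      simp [this])
    (by
      rintro _ ⟨v, rfl⟩
      ext u
      have : f (f' u) = 0 := LinearMap.congr_fun hff' u
      simp [← hfg (f' u) v, this])

variable (hfg : ∀ u v, B (f u) v = B u (g v)) (hfg' : ∀ u v, B (f' u) v = B u (g' v))

include hfg' in
theorem flip_cokernelPairing (hf'f : f' * f = 0) (hff' : f * f' = 0) (hg'g : g' * g = 0)
    (hgg' : g * g' = 0) :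
    (cokernelPairing hfg hf'f hff').flip =
      cokernelPairing (B := B.flip) (fun v u => (hfg u v).symm) hg'g hgg' := by
  ext v u
  exact hfg' u v

theorem bijective_cokernelPairing (hB : Function.Bijective B) (hf : Function.Exact f f')
    (hf' : Function.Exact f' f) :
    Function.Bijective (cokernelPairing hfg hf.linearMap_comp_eq_zero
      hf'.linearMap_comp_eq_zero) := by
  constructor
  · rw [injective_iff_map_eq_zero]
    intro u hu
    obtain ⟨u, rfl⟩ := Submodule.Quotient.mk_surjective _ u
    have hf'u : f' u = 0 := (map_eq_zero_iff B hB.injective).1 <|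
      LinearMap.ext fun v => LinearMap.congr_fun hu (Submodule.Quotient.mk v)
    exact (Submodule.Quotient.mk_eq_zero _).2 ((hf u).1 hf'u)
  · intro φ
    obtain ⟨w, hw⟩ := hB.surjective (φ ∘ₗ (range g).mkQ)
    have hfw : f w = 0 := (map_eq_zero_iff B hB.injective).1 <| LinearMap.ext fun v => by
      rw [hfg w v, hw]
      exact (congrArg φ <| (Submodule.Quotient.mk_eq_zero _).2 ⟨v, rfl⟩).trans (map_zero φ)
    obtain ⟨u, rfl⟩ := (hf' w).1 hfw
    refine ⟨Submodule.Quotient.mk u, ?_⟩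
    ext v
    exact LinearMap.congr_fun hw v

include hfg' in
theorem isPerfPair_cokernelPairing [B.IsPerfPair] (hf : Function.Exact f f')
    (hf' : Function.Exact f' f) (hg : Function.Exact g g') (hg' : Function.Exact g' g) :
    (cokernelPairing hfg hf.linearMap_comp_eq_zero hf'.linearMap_comp_eq_zero).IsPerfPair where
  bijective_left := bijective_cokernelPairing hfg (IsPerfPair.bijective_left B) hf hf'
  bijective_right := by
    rw [flip_cokernelPairing hfg hfg' _ _ hg.linearMap_comp_eq_zero hg'.linearMap_comp_eq_zero]
    exact bijective_cokernelPairing _ (IsPerfPair.bijective_right B) hg hg'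

end CokernelPairing

section SymplecticForm

open LinearMap Matrix

theorem isPerfPair_toLinearMap₂' {R n : Type*} [CommRing R] [Fintype n] [DecidableEq n]
    {J : Matrix n n R} (hJ : IsUnit J) : (toLinearMap₂' R J).IsPerfPair := by
  have factor : ⇑(toLinearMap₂' R J) = dotProductEquiv R n ∘ (· ᵥ* J) :=
    funext fun u => LinearMap.ext fun v =>
      (toLinearMap₂'_apply' J u v).trans (dotProduct_mulVec u J v)
  have vecMul_bijective : Function.Bijective (· ᵥ* J) :=
    ⟨vecMul_injective_of_isUnit hJ, vecMul_surjective_iff_isUnit.2 hJ⟩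
  refine IsPerfPair.of_bijective _ ?_
  rw [factor]
  exact (dotProductEquiv R n).bijective.comp vecMul_bijective

variable {A : Type*} [CommRing A]

variable (A) in
/-- The standard symplectic form `ω u v = u₀ v₁ - u₁ v₀` on `A²`. -/
def symplecticForm : (Fin 2 → A) →ₗ[A] (Fin 2 → A) →ₗ[A] A :=
  toLinearMap₂' A !![0, 1; -1, 0]

instance isPerfPair_symplecticForm : (symplecticForm A).IsPerfPair :=
  isPerfPair_toLinearMap₂' <| (Matrix.isUnit_iff_isUnit_det _).2 <| by simp

theorem isAdjointPair_symplecticForm_adjugate (P : Matrix (Fin 2) (Fin 2) A) :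
    IsAdjointPair (symplecticForm A) (symplecticForm A) (toLin' P) (toLin' P.adjugate) := by
  refine (isAdjointPair_toLinearMap₂' ..).2 ?_
  ext i j
  fin_cases i <;> fin_cases j <;> simp [adjugate_fin_two, mul_apply]

end SymplecticForm

section ExactPair

variable {A : Type*} [CommRing A] {x y : A}

theorem adjugate_gammaMat (x y a : A) : (gammaMat x y a).adjugate = etaMat x y a := by
  simp [gammaMat, etaMat, Matrix.adjugate_fin_two_of]

theorem adjugate_etaMat (x y a : A) : (etaMat x y a).adjugate = gammaMat x y a := by
  simp [gammaMat, etaMat, Matrix.adjugate_fin_two_of]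

theorem gammaMat_mul_etaMat (x y a : A) : gammaMat x y a * etaMat x y a = (x * y) • 1 := by
  rw [← adjugate_gammaMat, Matrix.mul_adjugate, gammaMat, Matrix.det_fin_two_of, mul_zero, sub_zero]

namespace IsExactZeroDivisorPair

protected theorem symm (h : IsExactZeroDivisorPair x y) : IsExactZeroDivisorPair y x :=
  ⟨h.2.1, h.1, h.2.2.2, h.2.2.1⟩

theorem mul_eq_zero_iff (h : IsExactZeroDivisorPair x y) {b : A} : x * b = 0 ↔ y ∣ b := by
  rw [mul_comm, h.2.2.1, Ideal.mem_span_singleton]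

protected theorem mul_eq_zero (h : IsExactZeroDivisorPair x y) : x * y = 0 :=
  h.mul_eq_zero_iff.2 dvd_rfl

theorem exact_etaMat_gammaMat (h : IsExactZeroDivisorPair x y) (a : A) :
    Function.Exact (Matrix.toLin' (etaMat x y a)) (Matrix.toLin' (gammaMat x y a)) := by
  intro u
  constructor
  · intro hu
    have h0 : x * u 0 + a * u 1 = 0 := by
      simpa [gammaMat, Matrix.vecHead, Matrix.vecTail] using congrFun hu 0
    have h1 : y * u 1 = 0 := by
      simpa [gammaMat, Matrix.vecHead, Matrix.vecTail] using congrFun hu 1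
    obtain ⟨t, ht⟩ := h.symm.mul_eq_zero_iff.1 h1
    obtain ⟨s, hs⟩ : y ∣ u 0 + a * t := h.mul_eq_zero_iff.1 (by linear_combination h0 - a * ht)
    refine ⟨![s, t], ?_⟩
    ext i
    fin_cases i
    · have : y * s - a * t = u 0 := by linear_combination -hs
      simpa [etaMat, sub_eq_add_neg, mul_comm] using this
    · simp [etaMat, ht, mul_comm]
  · rintro ⟨v, rfl⟩
    rw [← Matrix.toLin'_mul_apply, gammaMat_mul_etaMat, h.mul_eq_zero, zero_smul, map_zero,
      LinearMap.zero_apply]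

theorem exact_gammaMat_etaMat (h : IsExactZeroDivisorPair x y) (a : A) :
    Function.Exact (Matrix.toLin' (gammaMat x y a)) (Matrix.toLin' (etaMat x y a)) := by
  simpa [gammaMat, etaMat] using h.symm.exact_etaMat_gammaMat (-a)

theorem exists_isPerfPair_Gmod_Hmod (h : IsExactZeroDivisorPair x y) (a : A) :
    ∃ p : Gmod x y a →ₗ[A] Hmod x y a →ₗ[A] A, p.IsPerfPair := by
  have adj_γη := adjugate_gammaMat x y a ▸ isAdjointPair_symplecticForm_adjugate (gammaMat x y a)
  have adj_ηγ := adjugate_etaMat x y a ▸ isAdjointPair_symplecticForm_adjugate (etaMat x y a)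
  have exact_γη := h.exact_gammaMat_etaMat a
  have exact_ηγ := h.exact_etaMat_gammaMat a
  exact ⟨_, isPerfPair_cokernelPairing adj_γη adj_ηγ exact_γη exact_ηγ exact_ηγ exact_γη⟩

end IsExactZeroDivisorPair

end ExactPair

theorem endOp_G_algEquiv_end_H_general {A : Type*} [CommRing A] {x y : A}
    (hxy : IsExactZeroDivisorPair x y) (a : A) :
    Nonempty ((Module.End A (Gmod x y a))ᵐᵒᵖ ≃ₐ[A] Module.End A (Hmod x y a)) ∧
    (IsIndecomposableModule A (Gmod x y a) ↔
      IsIndecomposableModule A (Hmod x y a)) := by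
  obtain ⟨p, _⟩ := hxy.exists_isPerfPair_Gmod_Hmod a
  let φ := endOpAlgEquivEnd p
  exact ⟨⟨φ⟩, isIndecomposableModule_congr_of_endOp φ.toRingEquiv⟩

/-- **Corollary (4.3).** For an exact pair of zero divisors `x, y` and any
`a ∈ A`, there is an isomorphism of `A`-algebras
`End_A(G_a)^op ≅ End_A(H_a)`; in particular `G_a` is indecomposable if and
only if `H_a` is indecomposable. -/
theorem endOp_G_algEquiv_end_H {A : Type*} [CommRing A] [IsNoetherianRing A]
    [IsLocalRing A] {x y : A} (hxy : IsExactZeroDivisorPair x y) (a : A) :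
    Nonempty ((Module.End A (Gmod x y a))ᵐᵒᵖ ≃ₐ[A] Module.End A (Hmod x y a)) ∧
    (IsIndecomposableModule A (Gmod x y a) ↔
      IsIndecomposableModule A (Hmod x y a)) :=
  endOp_G_algEquiv_end_H_general hxy a
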